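/- Let k ≥ 1, let π, π' : Fin k → ℝ be strictly positive weight vectors, and let M_1, M_2, M_3 and M'_1, M'_2, M'_3 be invertible k×k real matrices. Suppose the parameter sets produce the same pairwise and triple moments: (i) M_u diag(π) M_wᵀ = M'_u diag(π') M'_wᵀ for each pair (u,w) ∈ {(1,2),(1,3),(2,3)}, and (ii) Σ_{j} π_j (M_1)_{i_1 j}(M_2)_{i_2 j}(M_3)_{i_3 j} = Σ_{j} π'_j (M'_1)_{i_1 j}(M'_2)_{i_2 j}(M'_3)_{i_3 j} for all i_1, i_2, i_3. Then the parameters agree up to a common column permutation: there exists a permutation σ of Fin k such that π'_j = π_{σ(j)} and (M'_v)_{ij} = (M_v)_{i σ(j)} for all v ∈ {1,2,3} and all i, j. -/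

import Mathlib

/-!
Comparing the slices of the triple moment with the pair moment of two views simultaneously
diagonalizes them. If `A, B, C` are the three views, then for each row index `i` of `C`, the slice
`A diag(C i) D Bᵀ` and the pair moment `A D Bᵀ` are the same for both parameter sets. Setting
`X = A⁻¹ A'` and cancelling `D' B'ᵀ` gives `X diag(C' i) = diag(C i) X`, so a nonzero entry `X a j`
forces column `j` of `C'` to equal column `a` of `C` (`column_eq_of_ne_zero`). There is no scaling
ambiguity, and the equality of columns in turn says `(C⁻¹ C') a j = 1 ≠ 0`, so the argument passes
cyclically through all three views with the same `a`. Choosing `a = σ j` for each `j` gives a map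
which is injective because `M' 0` has distinct columns; the weights then follow by cancelling `M 0`
and `M 1` in a pair moment.
-/

open Matrix in
/-- A nonzero entry `(a, j)` of `A⁻¹ A'` matches column `j` of `C'` with column `a` of `C`. -/
lemma column_eq_of_ne_zero {k : ℕ} {p p' : Fin k → ℝ} (hp' : ∀ j, 0 < p' j)
    {A B C A' B' C' : Matrix (Fin k) (Fin k) ℝ} (hA : IsUnit A) (hB' : IsUnit B')
    (hpair : A * diagonal p * Bᵀ = A' * diagonal p' * B'ᵀ)
    (htriple : ∀ i₁ i₂ i₃, ∑ j, p j * (A i₁ j * B i₂ j * C i₃ j)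
      = ∑ j, p' j * (A' i₁ j * B' i₂ j * C' i₃ j))
    {a j : Fin k} (h : (A⁻¹ * A') a j ≠ 0) (i : Fin k) : C' i j = C i a := by
  have hAdet : IsUnit A.det := (isUnit_iff_isUnit_det A).1 hA
  have hslice : A * (diagonal (C i) * (diagonal p * Bᵀ))
      = A' * (diagonal (C' i) * (diagonal p' * B'ᵀ)) := by
    ext x y
    have := htriple x y i
    simp only [mul_apply (M := A), mul_apply (M := A'), diagonal_mul, transpose_apply]
    convert this using 2 <;> ring
  have hX : A⁻¹ * A' * (diagonal p' * B'ᵀ) = diagonal p * Bᵀ := by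
    rw [Matrix.mul_assoc, ← Matrix.mul_assoc A', ← hpair, Matrix.mul_assoc A,
      nonsing_inv_mul_cancel_left _ _ hAdet]
  have hunit : IsUnit (diagonal p' * B'ᵀ) := by
    refine IsUnit.mul ?_ ((isUnit_transpose B').2 hB')
    rw [isUnit_diagonal, Pi.isUnit_iff]
    exact fun j => (hp' j).ne'.isUnit
  have hcomm : A⁻¹ * A' * diagonal (C' i) = diagonal (C i) * (A⁻¹ * A') := by
    apply hunit.mul_right_cancel
    rw [Matrix.mul_assoc (diagonal (C i)), hX, Matrix.mul_assoc, Matrix.mul_assoc, ← hslice,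
      nonsing_inv_mul_cancel_left _ _ hAdet]
  have := congrFun (congrFun hcomm a) j
  rw [mul_diagonal, diagonal_mul, mul_comm] at this
  exact mul_right_cancel₀ h this

open Matrix in
lemma inv_mul_ne_zero_of_column_eq {k : ℕ} {C C' : Matrix (Fin k) (Fin k) ℝ} (hC : IsUnit C)
    {a j : Fin k} (h : ∀ i, C' i j = C i a) : (C⁻¹ * C') a j ≠ 0 := by
  have h1 : (C⁻¹ * C') a j = (C⁻¹ * C) a a := by simp [mul_apply, h]
  rw [h1, nonsing_inv_mul _ ((isUnit_iff_isUnit_det C).1 hC)]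
  simp

/-- Identifiability up to column permutation: if two parameter sets
`(π, M₁, M₂, M₃)` and `(π', M'₁, M'₂, M'₃)`, with strictly positive weights and
invertible matrices, generate the same pairwise moments
`M_u diag(π) M_wᵀ` for `(u,w) ∈ {(1,2),(1,3),(2,3)}` and the same triple moments,
then they agree up to a common permutation of the columns. -/
theorem tensor_decomposition_identifiability
    {k : ℕ} (hk : 1 ≤ k)
    (π π' : Fin k → ℝ)
    (hπ_pos : ∀ j, 0 < π j) (hπ'_pos : ∀ j, 0 < π' j)
    (M M' : Fin 3 → Matrix (Fin k) (Fin k) ℝ)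
    (hM_inv : ∀ v, IsUnit (M v)) (hM'_inv : ∀ v, IsUnit (M' v))
    (hpair : ∀ u w : Fin 3, u < w →
      M u * Matrix.diagonal π * (M w).transpose
        = M' u * Matrix.diagonal π' * (M' w).transpose)
    (htriple : ∀ i₁ i₂ i₃ : Fin k,
      ∑ j : Fin k, π j * (M 0 i₁ j * M 1 i₂ j * M 2 i₃ j)
        = ∑ j : Fin k, π' j * (M' 0 i₁ j * M' 1 i₂ j * M' 2 i₃ j)) :
    ∃ σ : Equiv.Perm (Fin k),
      (∀ j, π' j = π (σ j)) ∧ ∀ v, ∀ i j, M' v i j = M v i (σ j) := by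
  have step01 : ∀ {a j}, ((M 0)⁻¹ * M' 0) a j ≠ 0 → ∀ i, M' 2 i j = M 2 i a :=
    column_eq_of_ne_zero hπ'_pos (hM_inv 0) (hM'_inv 1) (hpair 0 1 (by decide)) htriple
  have step12 : ∀ {a j}, ((M 1)⁻¹ * M' 1) a j ≠ 0 → ∀ i, M' 0 i j = M 0 i a :=
    column_eq_of_ne_zero hπ'_pos (hM_inv 1) (hM'_inv 2) (hpair 1 2 (by decide))
      (fun i₁ i₂ i₃ => by convert htriple i₃ i₁ i₂ using 3 <;> ring)
  have step20 : ∀ {a j}, ((M 2)⁻¹ * M' 2) a j ≠ 0 → ∀ i, M' 1 i j = M 1 i a := by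
    refine column_eq_of_ne_zero hπ'_pos (hM_inv 2) (hM'_inv 0) ?_
      (fun i₁ i₂ i₃ => by convert htriple i₂ i₃ i₁ using 3 <;> ring)
    simpa [Matrix.transpose_mul, Matrix.mul_assoc] using
      congrArg Matrix.transpose (hpair 0 2 (by decide))
  have hcol : ∀ j, ∃ a, ∀ v i, M' v i j = M v i a := by
    intro j
    have hX : IsUnit ((M 0)⁻¹ * M' 0) :=
      ((Matrix.isUnit_nonsing_inv_iff).2 (hM_inv 0)).mul (hM'_inv 0)
    obtain ⟨a, ha⟩ : ∃ a, ((M 0)⁻¹ * M' 0) a j ≠ 0 := by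
      by_contra! hzero
      exact ((Matrix.isUnit_iff_isUnit_det _).1 hX).ne_zero
        (Matrix.det_eq_zero_of_column_eq_zero j hzero)
    have h2 := step01 ha
    have h1 := step20 (inv_mul_ne_zero_of_column_eq (hM_inv 2) h2)
    have h0 := step12 (inv_mul_ne_zero_of_column_eq (hM_inv 1) h1)
    refine ⟨a, fun v => ?_⟩
    fin_cases v
    exacts [h0, h1, h2]
  choose s hs using hcol
  have hinj : Function.Injective s := by
    intro j l hjl
    by_contra hne
    refine ((Matrix.isUnit_iff_isUnit_det _).1 (hM'_inv 0)).ne_zero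
      (Matrix.det_zero_of_column_eq hne fun i => ?_)
    rw [hs, hs, hjl]
  let σ : Equiv.Perm (Fin k) := Equiv.ofBijective s (Finite.injective_iff_bijective.1 hinj)
  have hσ : ∀ v i j, M' v i j = M v i (σ j) := fun v i j => hs j v i
  refine ⟨σ, fun j => ?_, hσ⟩
  have hdiag : M 0 * Matrix.diagonal π * (M 1).transpose
      = M 0 * Matrix.diagonal (fun a => π' (σ.symm a)) * (M 1).transpose := by
    rw [hpair 0 1 (by decide)]
    ext x y
    simp only [Matrix.mul_apply (N := (M 1).transpose), Matrix.mul_apply (N := (M' 1).transpose),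
      Matrix.mul_diagonal, Matrix.transpose_apply, hσ]
    rw [← Equiv.sum_comp σ (fun a => M 0 x a * π' (σ.symm a) * M 1 y a)]
    simp only [Equiv.symm_apply_apply]
  have hd := (hM_inv 0).mul_left_cancel
    (((Matrix.isUnit_transpose (M 1)).2 (hM_inv 1)).mul_right_cancel hdiag)
  have := congrFun (Matrix.diagonal_injective hd) (σ j)
  simpa using this.symm
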